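/- Every minimum (n,k,t)-graph is a disjoint union of cliques: if G has the fewest edges among all graphs on n vertices in which every k vertices contain a clique on t vertices, then every connected component of G is a complete graph. -/

import Mathlib

open SimpleGraph

/-- `G` is a graph in which every set of `k` vertices contains a clique on `t` vertices. -/
def CliqueInEveryK {V : Type*} [DecidableEq V] (G : SimpleGraph V) (k t : ℕ) : Prop :=
  ∀ s : Finset V, s.card = k → ∃ c ⊆ s, G.IsNClique t c

/-- Every connected component of `G` is a complete graph. -/
def IsDisjointUnionOfCliques {V : Type*} (G : SimpleGraph V) : Prop :=
  ∀ u v : V, G.Reachable u v → u ≠ v → G.Adj u v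

/-- The number of edges of `G`. -/
noncomputable def edgeCount {V : Type*} (G : SimpleGraph V) : ℕ := Nat.card G.edgeSet

namespace NKT

open Finset

/-- Every set of `k` vertices contains a clique on `t` vertices. -/
def P {V : Type} (G : SimpleGraph V) (k t : ℕ) : Prop :=
  ∀ s : Finset V, s.card = k → ∃ c ⊆ s, G.IsNClique t c

/-- Adjacency is transitive on distinct vertices. -/
def Tr {V : Type} (G : SimpleGraph V) : Prop :=
  ∀ u v w, G.Adj u v → G.Adj v w → u ≠ w → G.Adj u w

open Classical in
/-- Adjacency indicator. -/
noncomputable def A {V : Type} (G : SimpleGraph V) (u v : V) : ℕ := if G.Adj u v then 1 else 0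

/-- Number of ordered adjacent pairs. -/
noncomputable def N {V : Type} [Fintype V] (G : SimpleGraph V) : ℕ := ∑ u, ∑ v, A G u v

lemma N_eq {V : Type} [Fintype V] (G : SimpleGraph V) [DecidableRel G.Adj] :
    N G = 2 * G.edgeFinset.card := by
  classical
  rw [← G.sum_degrees_eq_twice_card_edges]
  unfold N A
  refine Finset.sum_congr rfl fun u _ => ?_
  rw [← card_neighborFinset_eq_degree, neighborFinset_eq_filter, Finset.card_filter]
  refine Finset.sum_congr rfl fun v _ => ?_
  congr

lemma A_comm {V : Type} (G : SimpleGraph V) (u v : V) : A G u v = A G v u := by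
  unfold A
  by_cases h : G.Adj u v
  · rw [if_pos h, if_pos h.symm]
  · rw [if_neg h, if_neg fun h' => h h'.symm]

lemma sum_split {V : Type} [Fintype V] [DecidableEq V] (I : Finset V) (f : V → ℕ) :
    ∑ u, f u = ∑ u ∈ I, f u + ∑ w : {v // v ∉ I}, f w := by
  classical
  rw [← Finset.sum_add_sum_compl I]
  congr 1
  exact Finset.sum_subtype _ (by simp) f

open Classical in
lemma sum_A {V : Type} (G : SimpleGraph V) (I : Finset V) (w : V) :
    ∑ i ∈ I, A G w i = (I.filter fun i => G.Adj w i).card := by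
  unfold A
  rw [card_filter]

lemma sum_A_le_one {V : Type} (G : SimpleGraph V) (I : Finset V) (w : V)
    (h : ∀ a b, a ∈ I → b ∈ I → G.Adj w a → G.Adj w b → a = b) :
    ∑ i ∈ I, A G w i ≤ 1 := by
  classical
  rw [sum_A, card_le_one]
  intro a ha b hb
  rw [mem_filter] at ha hb
  exact h a b ha.1 hb.1 ha.2 hb.2

lemma N_split {V : Type} [Fintype V] [DecidableEq V] (I : Finset V) (G : SimpleGraph V) :
    N G = ∑ u ∈ I, ∑ v ∈ I, A G u v + 2 * ∑ w : {v // v ∉ I}, ∑ i ∈ I, A G w i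
      + N (G.comap (Subtype.val : {v // v ∉ I} → V)) := by
  have h : ∀ u, ∑ v, A G u v = ∑ v ∈ I, A G u v + ∑ w : {v // v ∉ I}, A G u w :=
    fun u => sum_split I _
  have h2 : N (G.comap (Subtype.val : {v // v ∉ I} → V)) =
    ∑ u : {v // v ∉ I}, ∑ v : {v // v ∉ I}, A G u v := rfl
  have h3 : ∑ u ∈ I, ∑ w : {v // v ∉ I}, A G u w = ∑ w : {v // v ∉ I}, ∑ i ∈ I, A G w i := by
    rw [Finset.sum_comm]
    simp_rw [A_comm G]
  rw [h2]
  unfold N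
  rw [sum_split I]
  simp_rw [h, Finset.sum_add_distrib]
  rw [h3]
  ring

lemma augment {V : Type} [Fintype V] [DecidableEq V] (I : Finset V) (H' : SimpleGraph {v // v ∉ I})
    (htr : Tr H') (s k k' : ℕ) (hP : P H' k' (s + 1)) (hk : k = k' + I.card)
    (hb : k ≤ I.card * (s + 1)) :
    ∃ H : SimpleGraph V, P H k (s + 2) ∧ N H ≤ N H' + 2 * Fintype.card {v // v ∉ I} := by
  classical
  let cls : {v // v ∉ I} → Finset {v // v ∉ I} := fun u => univ.filter fun v => v = u ∨ H'.Adj u v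
  have cls_eq : ∀ u v, cls u = cls v ↔ (u = v ∨ H'.Adj u v) := by
    intro u v
    constructor
    · intro h
      have : u ∈ cls v := by rw [← h]; simp [cls]
      simp only [cls, mem_filter, mem_univ, true_and] at this
      exact this.imp id fun h => h.symm
    · rintro (rfl | h)
      · rfl
      · ext w
        simp only [cls, mem_filter, mem_univ, true_and]
        constructor
        · rintro (rfl | h')
          · exact Or.inr h.symm
          · by_cases hw : w = v
            · exact Or.inl hw
            · exact Or.inr (htr _ _ _ h.symm h' (Ne.symm hw))
        · rintro (rfl | h')
          · exact Or.inr h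
          · by_cases hw : w = u
            · exact Or.inl hw
            · exact Or.inr (htr _ _ _ h h' (Ne.symm hw))
  have mem_cls : ∀ u v, v ∈ cls u ↔ cls v = cls u := by
    intro u v
    rw [cls_eq]
    simp [cls, H'.adj_comm]
  let B : Finset (Finset {v // v ∉ I}) := (univ.image cls).filter fun b => s + 1 ≤ b.card
  have hB1 : B.card * s < k' := by
    by_contra! hcon
    have hex : ∀ b : Finset {v // v ∉ I}, ∃ p ⊆ b, b ∈ B → p.card = s := by
      intro b
      by_cases hbB : b ∈ B
      · obtain ⟨p, hp, hc⟩ := Finset.exists_subset_card_eq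
          (show s ≤ b.card by have := (mem_filter.1 hbB).2; omega)
        exact ⟨p, hp, fun _ => hc⟩
      · exact ⟨∅, by simp, fun h => absurd h hbB⟩
    choose p hp hpc using hex
    have hmem : ∀ b ∈ B, ∀ y ∈ p b, cls y = b := by
      intro b hbB y hy
      obtain ⟨z, -, rfl⟩ := mem_image.1 (mem_filter.1 hbB).1
      exact (mem_cls _ _).1 (hp _ hy)
    have hcard : (B.biUnion p).card = B.card * s := by
      rw [card_biUnion, sum_congr rfl (fun b hb => hpc b hb)]
      · simp
      · intro b hb b' hb' hne
        refine Finset.disjoint_left.2 ?_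
        intro y hy hy'
        exact hne ((hmem b hb y hy).symm.trans (hmem b' hb' y hy'))
    obtain ⟨Z, hZ, hZc⟩ := Finset.exists_subset_card_eq (hcon.trans hcard.ge)
    obtain ⟨c, hc, hcl⟩ := hP Z hZc
    obtain ⟨x, hx⟩ : c.Nonempty := by rw [← card_pos, hcl.2]; omega
    obtain ⟨b, hbB, hxb⟩ := mem_biUnion.1 (hZ (hc hx))
    have : c ⊆ p b := by
      intro y hy
      obtain ⟨b', hb', hyb⟩ := mem_biUnion.1 (hZ (hc hy))
      have h1 : cls x = cls y := by
        rw [cls_eq]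
        by_cases hxy : x = y
        · exact Or.inl hxy
        · exact Or.inr (hcl.1 hx hy hxy)
      have : b = b' := by rw [← hmem b hbB x hxb, ← hmem b' hb' y hyb, h1]
      rwa [this]
    have := card_le_card this
    rw [hcl.2, hpc b hbB] at this
    omega
  have hBI : B.card ≤ I.card := by
    by_contra! h
    have := Nat.mul_le_mul_right s (show I.card + 1 ≤ B.card from h)
    nlinarith
  obtain ⟨e⟩ : Nonempty (B ↪ I) := Function.Embedding.nonempty_of_card_le (by simpa using hBI)
  let lab' : {v // v ∉ I} → V ⊕ Finset {v // v ∉ I} := fun w =>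
    if h : cls w ∈ B then Sum.inl (e ⟨cls w, h⟩ : V) else Sum.inr (cls w)
  have lab'_eq : ∀ u v, lab' u = lab' v ↔ cls u = cls v := by
    intro u v
    constructor
    · intro h
      by_cases hu : cls u ∈ B <;> by_cases hv : cls v ∈ B <;> simp [lab', hu, hv] at h
      · exact h
      · exact h
    · intro h
      simp only [lab', h]
  let lab : V → V ⊕ Finset {v // v ∉ I} := fun v => if h : v ∈ I then Sum.inl v else lab' ⟨v, h⟩
  have labI : ∀ i ∈ I, lab i = Sum.inl i := fun i hi => by simp [lab, hi]
  have labW : ∀ w : {v // v ∉ I}, lab w = lab' w := fun w => by simp [lab, w.2]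
  let H : SimpleGraph V :=
    { Adj := fun u v => u ≠ v ∧ lab u = lab v
      symm := ⟨fun u v h => ⟨h.1.symm, h.2.symm⟩⟩
      loopless := ⟨fun u h => h.1 rfl⟩ }
  refine ⟨H, ?_, ?_⟩
  · intro X hX
    by_contra hno
    have hsmall : ∀ l, (X.filter fun x => lab x = l).card ≤ s + 1 := by
      intro l
      by_contra! h
      obtain ⟨c, hc, hcc⟩ := Finset.exists_subset_card_eq (show s + 2 ≤ _ from h)
      refine hno ⟨c, hc.trans (filter_subset _ _), ?_, hcc⟩
      intro a ha b hb hab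
      exact ⟨hab, (mem_filter.1 (hc ha)).2.trans (mem_filter.1 (hc hb)).2.symm⟩
    have hex : ∀ i : V, ∃ c, (∃ x ∈ X, x ∉ I ∧ lab x = Sum.inl i) →
        c ∈ X ∧ c ∉ I ∧ lab c = Sum.inl i := by
      intro i
      by_cases h : ∃ x ∈ X, x ∉ I ∧ lab x = Sum.inl i
      · obtain ⟨x, hx⟩ := h
        exact ⟨x, fun _ => hx⟩
      · exact ⟨i, fun h' => absurd h' h⟩
    choose c hc using hex
    let Y0 : Finset V := (X \ I) \ (I \ X).image c
    have hY0 : k' ≤ Y0.card := by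
      have h1 := Finset.le_card_sdiff ((I \ X).image c) (X \ I)
      have h2 : ((I \ X).image c).card ≤ (I \ X).card := card_image_le
      have h3 := Finset.card_sdiff_add_card_inter X I
      have h4 := Finset.card_sdiff_add_card_inter I X
      rw [inter_comm] at h4
      show k' ≤ ((X \ I) \ (I \ X).image c).card
      omega
    obtain ⟨Z0, hZ0, hZ0c⟩ := Finset.exists_subset_card_eq hY0
    let Z : Finset {v // v ∉ I} := Z0.subtype _
    have hZc : Z.card = k' := by
      rw [card_subtype, filter_true_of_mem, hZ0c]
      intro x hx
      have := hZ0 hx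
      simp only [Y0, mem_sdiff] at this
      exact this.1.2
    obtain ⟨cc, hcc, hcl⟩ := hP Z hZc
    obtain ⟨x, hx⟩ : cc.Nonempty := by rw [← card_pos, hcl.2]; omega
    have hcls : ∀ y ∈ cc, cls y = cls x := by
      intro y hy
      rw [cls_eq]
      by_cases hxy : y = x
      · exact Or.inl hxy
      · exact Or.inr (hcl.1 hy hx hxy)
    have hxB : cls x ∈ B := by
      refine mem_filter.2 ⟨mem_image_of_mem _ (mem_univ _), ?_⟩
      rw [← hcl.2]
      exact card_le_card fun y hy => (mem_cls _ _).2 (hcls y hy)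
    let i : I := e ⟨cls x, hxB⟩
    have hlab : ∀ y ∈ cc, lab y = Sum.inl (i : V) := by
      intro y hy
      rw [labW, (lab'_eq y x).2 (hcls y hy)]
      simp [lab', hxB, i]
    have hccX : ∀ y ∈ cc, (y : V) ∈ Y0 := by
      intro y hy
      exact hZ0 (mem_subtype.1 (hcc hy))
    let cv : Finset V := cc.map (Function.Embedding.subtype _)
    have hcvc : cv.card = s + 1 := by rw [card_map, hcl.2]
    have hcv : ∀ y ∈ cv, y ∈ Y0 ∧ lab y = Sum.inl (i : V) := by
      intro y hy
      obtain ⟨z, hz, rfl⟩ := mem_map.1 hy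
      exact ⟨hccX z hz, hlab z hz⟩
    have hY0m : ∀ y ∈ Y0, y ∈ X ∧ y ∉ I ∧ ∀ j ∈ I, j ∉ X → c j ≠ y := by
      intro y hy
      simp only [Y0, mem_sdiff, mem_image, not_exists, not_and] at hy
      exact ⟨hy.1.1, hy.1.2, fun j hj hj' => hy.2 j ⟨hj, hj'⟩⟩
    obtain ⟨z, hzX, hzl, hzc⟩ : ∃ z ∈ X, lab z = Sum.inl (i : V) ∧ z ∉ cv := by
      by_cases hiX : (i : V) ∈ X
      · exact ⟨i, hiX, labI _ i.2, fun h => (hY0m _ (hcv _ h).1).2.1 i.2⟩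
      · have hx0 := hY0m _ (hccX x hx)
        have := hc i ⟨x, hx0.1, x.2, hlab x hx⟩
        exact ⟨c i, this.1, this.2.2, fun h => (hY0m _ (hcv _ h).1).2.2 i i.2 hiX rfl⟩
    have hsub : insert z cv ⊆ X.filter fun x => lab x = Sum.inl (i : V) := by
      intro y hy
      rcases mem_insert.1 hy with rfl | hy
      · exact mem_filter.2 ⟨hzX, hzl⟩
      · exact mem_filter.2 ⟨(hY0m _ (hcv _ hy).1).1, (hcv _ hy).2⟩
    have h1 := card_le_card hsub
    rw [card_insert_of_notMem hzc, hcvc] at h1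
    have h2 := hsmall (Sum.inl (i : V))
    omega
  · rw [N_split I H]
    have h1 : ∑ u ∈ I, ∑ v ∈ I, A H u v = 0 := by
      refine sum_eq_zero fun u hu => sum_eq_zero fun v hv => ?_
      unfold A
      rw [if_neg]
      rintro ⟨h1, h2⟩
      rw [labI u hu, labI v hv] at h2
      exact h1 (Sum.inl_injective h2)
    have h2 : ∑ w : {v // v ∉ I}, ∑ i ∈ I, A H w i ≤ Fintype.card {v // v ∉ I} := by
      have : ∀ w ∈ (univ : Finset {v // v ∉ I}), ∑ i ∈ I, A H w i ≤ 1 := by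
        intro w _
        refine sum_A_le_one H I w fun a b ha1 hb1 ha2 hb2 => ?_
        have ha := And.intro ha1 ha2
        have hb := And.intro hb1 hb2
        have := ha.2.2.symm.trans hb.2.2
        rw [labI a ha.1, labI b hb.1] at this
        exact Sum.inl_injective this
      simpa using Finset.sum_le_sum this
    have h3 : H.comap (Subtype.val : {v // v ∉ I} → V) = H' := by
      ext u v
      change ((u : V) ≠ v ∧ lab u = lab v) ↔ _
      rw [labW, labW, lab'_eq, cls_eq]
      constructor
      · rintro ⟨h, h' | h'⟩
        · exact absurd (congrArg _ h') h
        · exact h'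
      · intro h
        exact ⟨fun h' => h.ne (Subtype.ext h'), Or.inr h⟩
    rw [h1, h3]
    omega

/-- `I` is independent. -/
def Ind {V : Type} (G : SimpleGraph V) (I : Finset V) : Prop :=
  ∀ u ∈ I, ∀ v ∈ I, ¬ G.Adj u v

lemma turan_case {V : Type} [Fintype V] (G : SimpleGraph V) (k s a : ℕ)
    (ha : 0 < a) (hG : ∀ I, Ind G I → I.card ≤ a) (hk : a * (s + 1) < k)
    (hmin : ∀ H : SimpleGraph V, P H k (s + 2) → N G ≤ N H) : Tr G := by
  classical
  obtain ⟨T0, hd, hT0⟩ := exists_isTuranMaximal (V := V) ha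
  have hT : P T0ᶜ k (s + 2) := by
    intro X hX
    have hlt : hT0.finpartition.parts.card * (s + 1) < X.card := by
      rw [hX]
      exact (Nat.mul_le_mul_right _ hT0.card_parts_le).trans_lt hk
    obtain ⟨y, -, hy⟩ := Finset.exists_lt_card_fiber_of_mul_lt_card_of_maps_to
      (f := fun x => hT0.finpartition.part x)
      (fun x _ => hT0.finpartition.part_mem.2 (mem_univ x)) hlt
    obtain ⟨c, hc, hcc⟩ := Finset.exists_subset_card_eq (show s + 2 ≤ _ from hy)
    refine ⟨c, hc.trans (filter_subset _ _), ?_, hcc⟩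
    intro u hu v hv huv
    rw [compl_adj]
    refine ⟨huv, hT0.not_adj_iff_part_eq.2 ?_⟩
    exact (mem_filter.1 (hc hu)).2.trans (mem_filter.1 (hc hv)).2.symm
  have hle := hmin _ hT
  have hsum : ∀ G : SimpleGraph V, N G + N Gᶜ = N (⊤ : SimpleGraph V) := by
    intro G
    unfold N
    simp_rw [← sum_add_distrib]
    refine sum_congr rfl fun u _ => sum_congr rfl fun v _ => ?_
    unfold A
    by_cases h : u = v
    · subst h; simp
    · by_cases h' : G.Adj u v <;> simp [h, h']
  have h1 := hsum G
  have h2 := hsum T0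
  have hmax : Gᶜ.IsTuranMaximal a := by
    refine ⟨?_, ?_⟩
    · intro I hI
      have := hG I (fun u hu v hv huv => by
        have := hI.1 hu hv huv.ne
        rw [compl_adj] at this
        exact this.2 huv)
      rw [hI.2] at this
      omega
    · intro G' _ hG'
      have h3 := hT0.2 hG'
      have h4 := N_eq T0
      have h5 := N_eq Gᶜ
      omega
  intro u v w huv hvw huw
  have h := hmax.not_adj_trans (t := u) (s := v) (u := w) (by simp [huv]) (by simp [hvw])
  rw [compl_adj] at h
  tauto

lemma step_case {V : Type} [Fintype V] (G : SimpleGraph V) (k s : ℕ) (hkn : k ≤ Fintype.card V)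
    (hG : P G k (s + 2)) (hmin : ∀ H : SimpleGraph V, P H k (s + 2) → N G ≤ N H)
    (ih : ∀ (W : Type) [Fintype W] (G : SimpleGraph W) (k : ℕ), k ≤ Fintype.card W →
      P G k (s + 1) → (∀ H : SimpleGraph W, P H k (s + 1) → N G ≤ N H) → Tr G)
    (I : Finset V) (hI : Ind G I) (hImax : ∀ J, Ind G J → J.card ≤ I.card)
    (hb : k ≤ I.card * (s + 1)) (w : V) (hw : w ∉ I) : ∃! i, i ∈ I ∧ G.Adj w i := by
  classical
  have hIk : I.card < k := by
    by_contra! h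
    obtain ⟨Z, hZ, hZc⟩ := Finset.exists_subset_card_eq h
    obtain ⟨c, hc, hcl⟩ := hG Z hZc
    obtain ⟨x, hx, y, hy, hxy⟩ := Finset.one_lt_card.1 (show 1 < c.card by rw [hcl.2]; omega)
    exact hI x (hZ (hc hx)) y (hZ (hc hy)) (hcl.1 hx hy hxy)
  obtain ⟨k', rfl⟩ : ∃ k', k = k' + I.card := ⟨k - I.card, by omega⟩
  have hcW : Fintype.card {v // v ∉ I} = Fintype.card V - I.card := by
    rw [Fintype.card_subtype_compl]; simp
  have hG' : P (G.comap (Subtype.val : {v // v ∉ I} → V)) k' (s + 1) := by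
    intro X hX
    let X' : Finset V := X.map (Function.Embedding.subtype _)
    have hdis : Disjoint X' I := by
      rw [Finset.disjoint_left]
      intro x hx
      obtain ⟨z, -, rfl⟩ := mem_map.1 hx
      exact z.2
    obtain ⟨c, hc, hcl⟩ := hG (X' ∪ I) (by rw [card_union_of_disjoint hdis, card_map, hX])
    have h1 : (c ∩ I).card ≤ 1 := by
      rw [card_le_one]
      intro a ha b hb
      by_contra hab
      have ha := mem_inter.1 ha
      have hb := mem_inter.1 hb
      exact hI a ha.2 b hb.2 (hcl.1 ha.1 hb.1 hab)
    have h2 : s + 1 ≤ (c \ I).card := by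
      have := card_sdiff_add_card_inter c I
      have := hcl.2
      omega
    obtain ⟨d, hd, hdc⟩ := Finset.exists_subset_card_eq h2
    have hdI : ∀ x ∈ d, x ∉ I := fun x hx => (mem_sdiff.1 (hd hx)).2
    refine ⟨d.subtype _, ?_, ?_, ?_⟩
    · intro x hx
      have hxc := (mem_sdiff.1 (hd (mem_subtype.1 hx))).1
      rcases mem_union.1 (hc hxc) with h | h
      · obtain ⟨z, hz, hzx⟩ := mem_map.1 h
        have : z = x := Subtype.ext hzx
        rwa [← this]
      · exact absurd h x.2
    · intro x hx y hy hxy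
      exact hcl.1 (mem_sdiff.1 (hd (mem_subtype.1 hx))).1 (mem_sdiff.1 (hd (mem_subtype.1 hy))).1
        (fun h => hxy (Subtype.ext h))
    · rw [card_subtype, filter_true_of_mem hdI, hdc]
  obtain ⟨H', hH', hH'min⟩ : ∃ H' : SimpleGraph {v // v ∉ I}, P H' k' (s + 1) ∧
      ∀ H : SimpleGraph {v // v ∉ I}, P H k' (s + 1) → N H' ≤ N H := by
    obtain ⟨H', h1, h2⟩ := Finset.exists_min_image
      (univ.filter fun H : SimpleGraph {v // v ∉ I} => P H k' (s + 1)) N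
      ⟨_, mem_filter.2 ⟨mem_univ _, hG'⟩⟩
    exact ⟨H', (mem_filter.1 h1).2, fun H hH => h2 H (mem_filter.2 ⟨mem_univ _, hH⟩)⟩
  have htr := ih _ H' k' (by omega) hH' hH'min
  obtain ⟨H, hH, hHN⟩ := augment I H' htr s _ k' hH' rfl hb
  have e1 := hmin H hH
  have e2 := hH'min _ hG'
  have e3 := N_split I G
  have e4 : ∑ w : {v // v ∉ I}, ∑ i ∈ I, A G w i ≤ ∑ w : {v // v ∉ I}, 1 := by
    simp only [sum_const, card_univ, smul_eq_mul, mul_one]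
    omega
  have hge : ∀ w : {v // v ∉ I}, 1 ≤ ∑ i ∈ I, A G w i := by
    intro w
    by_contra! h
    have h0 : ∑ i ∈ I, A G w i = 0 := by omega
    have hna : ∀ i ∈ I, ¬ G.Adj w i := by
      intro i hi hadj
      have := Finset.sum_eq_zero_iff.1 h0 i hi
      simp [A, hadj] at this
    have := hImax (insert (w : V) I) (by
      intro u hu v hv
      rcases mem_insert.1 hu with rfl | hu' <;> rcases mem_insert.1 hv with rfl | hv'
      · simp
      · exact hna v hv'
      · exact fun h => hna u hu' h.symm
      · exact hI u hu' v hv')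
    rw [card_insert_of_notMem w.2] at this
    omega
  have heq := (Finset.sum_eq_sum_iff_of_le (fun w _ => hge w)).1
    (le_antisymm (Finset.sum_le_sum fun w _ => hge w) e4) ⟨w, hw⟩ (mem_univ _)
  rw [sum_A] at heq
  obtain ⟨i, hi⟩ := card_eq_one.1 heq.symm
  refine ⟨i, ?_, ?_⟩
  · have : i ∈ ({i} : Finset V) := mem_singleton_self i
    rw [← hi] at this
    exact mem_filter.1 this
  · intro j hj
    have : j ∈ ({i} : Finset V) := by
      rw [← hi]
      exact mem_filter.2 hj
    exact mem_singleton.1 this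

lemma tr_of_unique {V : Type} [Fintype V] (G : SimpleGraph V) (m : ℕ)
    (hex : ∃ I, Ind G I ∧ I.card = m)
    (huniq : ∀ I, Ind G I → I.card = m → ∀ w ∉ I, ∃! i, i ∈ I ∧ G.Adj w i) : Tr G := by
  classical
  have swap : ∀ I, Ind G I → I.card = m → ∀ x ∉ I, ∀ i ∈ I, G.Adj x i →
      Ind G (insert x (I.erase i)) ∧ (insert x (I.erase i)).card = m := by
    intro I hI hIm x hx i hi hxi
    have hna : ∀ j ∈ I.erase i, ¬ G.Adj x j := by
      intro j hj hadj
      exact (mem_erase.1 hj).1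
        ((huniq I hI hIm x hx).unique ⟨(mem_erase.1 hj).2, hadj⟩ ⟨hi, hxi⟩)
    refine ⟨?_, ?_⟩
    · intro u hu v hv
      rcases mem_insert.1 hu with rfl | hu' <;> rcases mem_insert.1 hv with rfl | hv'
      · simp
      · exact hna v hv'
      · exact fun h => hna u hu' h.symm
      · exact hI u (mem_erase.1 hu').2 v (mem_erase.1 hv').2
    · rw [card_insert_of_notMem (fun h => hx (mem_erase.1 h).2), card_erase_of_mem hi, hIm]
      have : 0 < I.card := card_pos.2 ⟨i, hi⟩
      omega
  have key : ∀ I, Ind G I → I.card = m → ∀ u v w, v ∈ I → G.Adj u v → G.Adj v w → u ≠ w →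
      G.Adj u w := by
    intro I hI hIm u v w hv huv hvw huw
    have hu : u ∉ I := fun h => hI u h v hv huv
    have hw : w ∉ I := fun h => hI v hv w h hvw
    obtain ⟨h1, h2⟩ := swap I hI hIm u hu v hv huv
    have hw' : w ∉ insert u (I.erase v) := by
      simp [huw.symm, hw]
    obtain ⟨j, ⟨hj, hadj⟩, -⟩ := huniq _ h1 h2 w hw'
    rcases mem_insert.1 hj with rfl | hj
    · exact hadj.symm
    · exact absurd ((huniq I hI hIm w hw).unique ⟨(mem_erase.1 hj).2, hadj⟩ ⟨hv, hvw.symm⟩)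
        (mem_erase.1 hj).1
  obtain ⟨I, hI, hIm⟩ := hex
  intro u v w huv hvw huw
  by_cases hv : v ∈ I
  · exact key I hI hIm u v w hv huv hvw huw
  · obtain ⟨i, ⟨hi, hadj⟩, -⟩ := huniq I hI hIm v hv
    obtain ⟨h1, h2⟩ := swap I hI hIm v hv i hi hadj
    exact key _ h1 h2 u v w (mem_insert_self _ _) huv hvw huw

theorem main (s : ℕ) : ∀ (V : Type) [Fintype V] (G : SimpleGraph V) (k : ℕ),
    k ≤ Fintype.card V → P G k (s + 1) →
    (∀ H : SimpleGraph V, P H k (s + 1) → N G ≤ N H) → Tr G := by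
  classical
  induction s with
  | zero =>
    intro V _ G k hk hG hmin u v w huv
    have hbot : P (⊥ : SimpleGraph V) k (0 + 1) := by
      intro X hX
      obtain ⟨c, hc, hcl⟩ := hG X hX
      refine ⟨c, hc, ?_, hcl.2⟩
      intro a ha b hb hab
      exact absurd (card_le_one.1 hcl.2.le a ha b hb) hab
    have h := hmin _ hbot
    have h0 : N (⊥ : SimpleGraph V) = 0 := by simp [N, A]
    have h1 : N G = 0 := by omega
    have h2 := Finset.sum_eq_zero_iff.1 (Finset.sum_eq_zero_iff.1 h1 u (mem_univ u)) v (mem_univ v)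
    simp [A, huv] at h2
  | succ s ih =>
    intro V _ G k hk hG hmin
    obtain ⟨I, hI, hImax⟩ := Finset.exists_max_image
      (univ.filter fun I : Finset V => Ind G I) Finset.card
      ⟨∅, mem_filter.2 ⟨mem_univ _, by simp [Ind]⟩⟩
    replace hI := (mem_filter.1 hI).2
    replace hImax : ∀ J, Ind G J → J.card ≤ I.card :=
      fun J hJ => hImax J (mem_filter.2 ⟨mem_univ _, hJ⟩)
    rcases Nat.lt_or_ge (I.card * (s + 1)) k with h | h
    · refine turan_case G k s I.card ?_ hImax h hmin
      have : 0 < Fintype.card V := by omega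
      obtain ⟨x⟩ := Fintype.card_pos_iff.1 this
      exact hImax {x} (by simp [Ind])
    · refine tr_of_unique G I.card ⟨I, hI, rfl⟩ ?_
      intro J hJ hJc w hw
      exact step_case G k s hk hG hmin ih J hJ (by rw [hJc]; exact hImax) (by rw [hJc]; exact h) w hw

end NKT

/-- Every minimum `(n,k,t)`-graph is a disjoint union of cliques. -/
theorem stmt_14 {n k t : ℕ} (ht : 1 ≤ t) (htk : t ≤ k) (hkn : k ≤ n)
    (G : SimpleGraph (Fin n)) (hG : CliqueInEveryK G k t)
    (hmin : ∀ H : SimpleGraph (Fin n), CliqueInEveryK H k t →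
      edgeCount G ≤ edgeCount H) :
    IsDisjointUnionOfCliques G := by
  classical
  obtain ⟨s, rfl⟩ : ∃ s, t = s + 1 := ⟨t - 1, by omega⟩
  have hN : ∀ H : SimpleGraph (Fin n), NKT.N H = 2 * edgeCount H := by
    intro H
    rw [NKT.N_eq H, edgeCount, Nat.card_eq_fintype_card, edgeFinset_card]
  have htr : NKT.Tr G := NKT.main s (Fin n) G k (by simpa using hkn) hG (by
    intro H hH
    rw [hN, hN]
    exact Nat.mul_le_mul_left 2 (hmin H hH))
  intro u v huv
  obtain ⟨p⟩ := huv
  induction p with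
  | nil => intro h; exact absurd rfl h
  | @cons a b c hab p ih =>
    intro hac
    by_cases hbc : b = c
    · subst hbc; exact hab
    · exact htr _ _ _ hab (ih hbc) hac
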